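/- arXiv:2002.00823 — 4 statements merged into one kernel-verified Lean document; each statement's English description precedes it below -/
import Mathlib

section
/- Let U ⊆ ℝⁿ be a nonempty open set with n ≥ 3, and let λ_1,…,λ_n : U → ℝ be C² functions with pairwise distinct values (λ_i(R) ≠ λ_j(R) for all i ≠ j and all R ∈ U). For i ≠ j set a_{ij} := ∂_j λ_i / (λ_i − λ_j). If the Tsarev condition ∂_k a_{ij} = ∂_j a_{ik} holds on U for all pairwise distinct i, j, k, then also ∂_k a_{ij} + a_{ij} a_{jk} + a_{ik} a_{kj} − a_{ij} a_{ik} = 0 on U for all pairwise distinct i, j, k. -/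
/-!
Writing `∂_j λ_i = a_{ij} (λ_i − λ_j)` and differentiating once more gives
`∂_k ∂_j λ_i = ∂_k a_{ij} (λ_i − λ_j) + a_{ij} (a_{ik} (λ_i − λ_k) − a_{jk} (λ_j − λ_k))`
(`pd_pd_eq`). The left side is symmetric in `j` and `k` (`pd_comm`), so the right side may be equated
with itself after exchanging `j` and `k`. Under the Tsarev condition `∂_j a_{ik} = ∂_k a_{ij}`,
the difference of the two sides is `λ_k − λ_j` times the claimed expression, and
`λ_k − λ_j` does not vanish.
-/

/-- Partial derivative in the `i`-th coordinate direction. -/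
noncomputable def pd {n : ℕ} (i : Fin n) (f : (Fin n → ℝ) → ℝ) (x : Fin n → ℝ) : ℝ :=
  fderiv ℝ f x (Pi.single i 1)

lemma differentiableAt_pd {n : ℕ} {f : (Fin n → ℝ) → ℝ} {x : Fin n → ℝ}
    (hf : ContDiffAt ℝ 2 f x) (j : Fin n) : DifferentiableAt ℝ (pd j f) x := by
  have h : DifferentiableAt ℝ (fderiv ℝ f) x :=
    (hf.fderiv_right (m := 1) (by norm_num)).differentiableAt (by norm_num)
  exact h.clm_apply (differentiableAt_const _)

/-- Symmetry of mixed second partial derivatives of a `C²` function. -/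
lemma pd_comm {n : ℕ} {f : (Fin n → ℝ) → ℝ} {x : Fin n → ℝ}
    (hf : ContDiffAt ℝ 2 f x) (j k : Fin n) : pd k (pd j f) x = pd j (pd k f) x := by
  have h : DifferentiableAt ℝ (fderiv ℝ f) x :=
    (hf.fderiv_right (m := 1) (by norm_num)).differentiableAt (by norm_num)
  have key (p q : Fin n) :
      pd q (pd p f) x = fderiv ℝ (fderiv ℝ f) x (Pi.single q 1) (Pi.single p 1) := by
    change fderiv ℝ (fun y => fderiv ℝ f y (Pi.single p 1)) x (Pi.single q 1) = _
    rw [fderiv_clm_apply h (differentiableAt_const _)]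
    simp
  rw [key, key]
  exact hf.isSymmSndFDerivAt (by simp) _ _

/-- If `b = ∂_j f / (f − g)` with `f ≠ g` at `x`, then differentiating `∂_j f = b (f − g)`
by the product rule is legitimate at `x`. -/
lemma pd_pd_eq {n : ℕ} {f g b : (Fin n → ℝ) → ℝ} {x : Fin n → ℝ}
    (hf : ContDiffAt ℝ 2 f x) (hg : ContDiffAt ℝ 2 g x) (hne : f x ≠ g x) (j k : Fin n)
    (hb : ∀ y, b y = pd j f y / (f y - g y)) :
    pd k (pd j f) x = pd k b x * (f x - g x) + b x * (pd k f x - pd k g x) := by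
  have hf1 : DifferentiableAt ℝ f x := hf.differentiableAt (by norm_num)
  have hg1 : DifferentiableAt ℝ g x := hg.differentiableAt (by norm_num)
  have hb1 : DifferentiableAt ℝ b x := by
    rw [funext hb]
    simp only [div_eq_mul_inv]
    exact (differentiableAt_pd hf j).fun_mul ((hf1.fun_sub hg1).fun_inv (sub_ne_zero.2 hne))
  -- The product form of `∂_j f` holds only where `f ≠ g`, which by continuity includes a
  -- neighbourhood of `x`.
  have hev : pd j f =ᶠ[nhds x] fun y => b y * (f y - g y) := by
    filter_upwards [(hf1.continuousAt.sub hg1.continuousAt).eventually_ne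
      (sub_ne_zero.2 hne)] with y hy
    rw [hb y]
    exact (div_mul_cancel₀ _ hy).symm
  have h := hb1.hasFDerivAt.mul (hf1.hasFDerivAt.sub hg1.hasFDerivAt)
  have h2 : fderiv ℝ (pd j f) x = _ := hev.fderiv_eq.trans h.fderiv
  unfold pd at h2 ⊢
  rw [h2]
  simp
  ring

/-- The Tsarev condition `∂_k a_{ij} = ∂_j a_{ik}` for `a_{ij} = ∂_j λ_i / (λ_i − λ_j)`
implies `∂_k a_{ij} + a_{ij} a_{jk} + a_{ik} a_{kj} − a_{ij} a_{ik} = 0`. -/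
theorem stmt_1 {n : ℕ} (hn : 3 ≤ n) (U : Set (Fin n → ℝ)) (hUopen : IsOpen U)
    (hUne : U.Nonempty)
    (lam : Fin n → (Fin n → ℝ) → ℝ)
    (hlam : ∀ i : Fin n, ContDiffOn ℝ 2 (lam i) U)
    (hdist : ∀ i j : Fin n, i ≠ j → ∀ x ∈ U, lam i x ≠ lam j x)
    (a : Fin n → Fin n → (Fin n → ℝ) → ℝ)
    (ha : ∀ i j : Fin n, i ≠ j → ∀ x, a i j x = pd j (lam i) x / (lam i x - lam j x))
    (hTsarev : ∀ i j k : Fin n, i ≠ j → j ≠ k → i ≠ k → ∀ x ∈ U,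
      pd k (a i j) x = pd j (a i k) x) :
    ∀ i j k : Fin n, i ≠ j → j ≠ k → i ≠ k → ∀ x ∈ U,
      pd k (a i j) x + a i j x * a j k x + a i k x * a k j x - a i j x * a i k x = 0 := by
  intro i j k hij hjk hik x hx
  have hC (p : Fin n) : ContDiffAt ℝ 2 (lam p) x :=
    (hlam p).contDiffAt (hUopen.mem_nhds hx)
  have hD (p q : Fin n) (h : p ≠ q) : pd q (lam p) x = a p q x * (lam p x - lam q x) := by
    rw [ha p q h, div_mul_cancel₀ _ (sub_ne_zero.2 (hdist p q h x hx))]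
  have e1 := pd_pd_eq (hC i) (hC j) (hdist i j hij x hx) j k (ha i j hij)
  have e2 := pd_pd_eq (hC i) (hC k) (hdist i k hik x hx) k j (ha i k hik)
  rw [pd_comm (hC i), e2, ← hTsarev i j k hij hjk hik x hx, hD i j hij, hD i k hik,
    hD k j hjk.symm, hD j k hjk] at e1
  apply mul_left_cancel₀ (sub_ne_zero.2 (hdist k j hjk.symm x hx))
  linear_combination -e1
end

section
/- Let U ⊆ ℝⁿ be a nonempty open set with n ≥ 3, and let λ_1,…,λ_n : U → ℝ be C² functions with pairwise distinct values. For i ≠ j set a_{ij} := ∂_j λ_i / (λ_i − λ_j), and assume the Tsarev condition ∂_k a_{ij} = ∂_j a_{ik} for all pairwise distinct i, j, k. Let μ_1,…,μ_n : U → ℝ be C² functions satisfying ∂_j μ_i = a_{ij}(μ_i − μ_j) for all i ≠ j. Let s_{ij} (i ≠ j) be C¹ functions on U with s_{ij} = −s_{ji}, and define D_{ij} := s_{ij}(μ_i − μ_j), d_{ij} := s_{ij}(λ_i − λ_j). Suppose that for all pairwise distinct i, j, l the equation (∂_l λ_i)D_{ij} + (∂_i λ_j)D_{jl} + (∂_j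 λ_i)D_{il} + (λ_i − λ_l)∂_i D_{lj} + (λ_j − λ_l)∂_j D_{li} + (λ_l − λ_j)∂_l D_{ij} = (∂_l μ_i)d_{ij} + (∂_i μ_j)d_{jl} + (∂_j μ_i)d_{il} + (μ_i − μ_l)∂_i d_{lj} + (μ_j − μ_l)∂_j d_{li} + (μ_l − μ_j)∂_l d_{ij} holds on U. Then for all pairwise distinct i, j, l: (∂_i s_{lj} + ∂_l s_{ji} + ∂_j s_{il})·((λ_i − λ_l)(μ_j − μ_l) − (λ_j − λ_l)(μ_i − μ_l)) = 0 on U. -/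
theorem pd_mul_sub {n : ℕ} (k : Fin n) {f g h F : (Fin n → ℝ) → ℝ} {x : Fin n → ℝ}
    (hF : ∀ y, F y = f y * (g y - h y)) (hf : DifferentiableAt ℝ f x)
    (hg : DifferentiableAt ℝ g x) (hh : DifferentiableAt ℝ h x) :
    pd k F x = pd k f x * (g x - h x) + f x * (pd k g x - pd k h x) := by
  have key := (hf.hasFDerivAt.mul (hg.hasFDerivAt.sub hh.hasFDerivAt)).fderiv
  have e : F = f * (g - h) := funext hF
  unfold pd
  rw [e, key]
  simp
  ring

theorem pd_antisymm {n : ℕ} (k : Fin n) {U : Set (Fin n → ℝ)} (hU : IsOpen U)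
    {f g : (Fin n → ℝ) → ℝ} (h : ∀ y ∈ U, f y = - g y) {x : Fin n → ℝ} (hx : x ∈ U) :
    pd k f x = - pd k g x := by
  have e : f =ᶠ[nhds x] -g := by
    filter_upwards [hU.mem_nhds hx] with y hy using h y hy
  unfold pd
  rw [e.fderiv_eq, fderiv_neg]
  simp

/-- The coefficient equation of the second-order extension of conservation laws yields the
cyclic closedness condition on the antisymmetric fields `s_{ij}`. -/
theorem stmt_8 {n : ℕ} (hn : 3 ≤ n) (U : Set (Fin n → ℝ)) (hUopen : IsOpen U)
    (hUne : U.Nonempty)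
    (lam : Fin n → (Fin n → ℝ) → ℝ)
    (hlam : ∀ i : Fin n, ContDiffOn ℝ 2 (lam i) U)
    (hdist : ∀ i j : Fin n, i ≠ j → ∀ x ∈ U, lam i x ≠ lam j x)
    (a : Fin n → Fin n → (Fin n → ℝ) → ℝ)
    (ha : ∀ i j : Fin n, i ≠ j → ∀ x, a i j x = pd j (lam i) x / (lam i x - lam j x))
    (hTsarev : ∀ i j k : Fin n, i ≠ j → j ≠ k → i ≠ k → ∀ x ∈ U,
      pd k (a i j) x = pd j (a i k) x)
    (μ : Fin n → (Fin n → ℝ) → ℝ)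
    (hμ : ∀ i : Fin n, ContDiffOn ℝ 2 (μ i) U)
    (hsys : ∀ i j : Fin n, i ≠ j → ∀ x ∈ U, pd j (μ i) x = a i j x * (μ i x - μ j x))
    (s : Fin n → Fin n → (Fin n → ℝ) → ℝ)
    (hs : ∀ i j : Fin n, i ≠ j → ContDiffOn ℝ 1 (s i j) U)
    (hanti : ∀ i j : Fin n, i ≠ j → ∀ x ∈ U, s i j x = - s j i x)
    (D d : Fin n → Fin n → (Fin n → ℝ) → ℝ)
    (hD : ∀ i j : Fin n, i ≠ j → ∀ x, D i j x = s i j x * (μ i x - μ j x))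
    (hd : ∀ i j : Fin n, i ≠ j → ∀ x, d i j x = s i j x * (lam i x - lam j x))
    (heq : ∀ i j l : Fin n, i ≠ j → j ≠ l → i ≠ l → ∀ x ∈ U,
      pd l (lam i) x * D i j x + pd i (lam j) x * D j l x + pd j (lam i) x * D i l x
        + (lam i x - lam l x) * pd i (D l j) x + (lam j x - lam l x) * pd j (D l i) x
        + (lam l x - lam j x) * pd l (D i j) x
      = pd l (μ i) x * d i j x + pd i (μ j) x * d j l x + pd j (μ i) x * d i l x
        + (μ i x - μ l x) * pd i (d l j) x + (μ j x - μ l x) * pd j (d l i) x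
        + (μ l x - μ j x) * pd l (d i j) x) :
    ∀ i j l : Fin n, i ≠ j → j ≠ l → i ≠ l → ∀ x ∈ U,
      (pd i (s l j) x + pd l (s j i) x + pd j (s i l) x)
        * ((lam i x - lam l x) * (μ j x - μ l x) - (lam j x - lam l x) * (μ i x - μ l x))
        = 0 := by
  intro i j l hij hjl hil x hx
  have hL : ∀ p, DifferentiableAt ℝ (lam p) x := fun p =>
    ((hlam p).contDiffAt (hUopen.mem_nhds hx)).differentiableAt (by norm_num)
  have hM : ∀ p, DifferentiableAt ℝ (μ p) x := fun p =>
    ((hμ p).contDiffAt (hUopen.mem_nhds hx)).differentiableAt (by norm_num)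
  have hS : ∀ p q, p ≠ q → DifferentiableAt ℝ (s p q) x := fun p q hpq =>
    ((hs p q hpq).contDiffAt (hUopen.mem_nhds hx)).differentiableAt (by norm_num)
  have hpL : ∀ p q, p ≠ q → pd q (lam p) x = a p q x * (lam p x - lam q x) := by
    intro p q hpq
    rw [ha p q hpq x, div_mul_cancel₀ _ (sub_ne_zero.mpr (hdist p q hpq x hx))]
  have hpM : ∀ p q, p ≠ q → pd q (μ p) x = a p q x * (μ p x - μ q x) :=
    fun p q hpq => hsys p q hpq x hx
  have hpD : ∀ k p q, p ≠ q → pd k (D p q) x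
      = pd k (s p q) x * (μ p x - μ q x) + s p q x * (pd k (μ p) x - pd k (μ q) x) :=
    fun k p q hpq => pd_mul_sub k (hD p q hpq) (hS p q hpq) (hM p) (hM q)
  have hpd : ∀ k p q, p ≠ q → pd k (d p q) x
      = pd k (s p q) x * (lam p x - lam q x) + s p q x * (pd k (lam p) x - pd k (lam q) x) :=
    fun k p q hpq => pd_mul_sub k (hd p q hpq) (hS p q hpq) (hL p) (hL q)
  have h := heq i j l hij hjl hil x hx
  rw [hpD i l j hjl.symm, hpD j l i hil.symm, hpD l i j hij,
    hpd i l j hjl.symm, hpd j l i hil.symm, hpd l i j hij,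
    hD i j hij, hD j l hjl, hD i l hil, hd i j hij, hd j l hjl, hd i l hil,
    hpL i l hil, hpL j i hij.symm, hpL i j hij, hpL l i hil.symm, hpL l j hjl.symm,
    hpL j l hjl, hpM i l hil, hpM j i hij.symm, hpM i j hij, hpM l i hil.symm,
    hpM l j hjl.symm, hpM j l hjl,
    hanti l j hjl.symm x hx, hanti l i hil.symm x hx] at h
  rw [pd_antisymm l hUopen (hanti j i hij.symm) hx, pd_antisymm j hUopen (hanti i l hil) hx]
  -- `h` is the expanded coefficient equation; its undifferentiated terms cancel identically.
  linear_combination -h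
end

section
/- Let U ⊆ (0,∞) × ℝ be a nonempty convex open set and let f : U → ℝ be a C² function of the variables (r, v). Then there exists a C² function g : U → ℝ satisfying ∂g/∂r = −v·∂f/∂r − ∂f/∂v and ∂g/∂v = −r·∂f/∂r − v·∂f/∂v on U if and only if ∂²f/∂v² = r·∂²f/∂r² on U. -/
lemma contDiffOn_pd {n : ℕ} {U : Set (Fin n → ℝ)} (hU : IsOpen U) {f : (Fin n → ℝ) → ℝ}
    (hf : ContDiffOn ℝ 2 f U) (i : Fin n) : ContDiffOn ℝ 1 (pd i f) U :=
  (hf.fderiv_of_isOpen hU (m := 1) (by norm_num)).clm_apply contDiffOn_const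

lemma pd_comm_s16 {n : ℕ} {U : Set (Fin n → ℝ)} (hU : IsOpen U) {f : (Fin n → ℝ) → ℝ}
    (hf : ContDiffOn ℝ 2 f U) {p : Fin n → ℝ} (hp : p ∈ U) (i j : Fin n) :
    pd i (pd j f) p = pd j (pd i f) p := by
  have hd : DifferentiableAt ℝ (fderiv ℝ f) p :=
    ((hf.fderiv_of_isOpen hU (m := 1) (by norm_num)).differentiableOn
      (by norm_num)).differentiableAt (hU.mem_nhds hp)
  have key (k l : Fin n) :
      pd k (pd l f) p = fderiv ℝ (fderiv ℝ f) p (Pi.single k 1) (Pi.single l 1) := by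
    have h : HasFDerivAt (pd l f) _ p := hd.hasFDerivAt.clm_apply (hasFDerivAt_const _ p)
    rw [pd, h.fderiv]
    simp
  rw [key, key]
  exact (hf.contDiffAt (hU.mem_nhds hp)).isSymmSndFDerivAt (by simp) _ _

lemma pd_congr {n : ℕ} {U : Set (Fin n → ℝ)} (hU : IsOpen U) {f g : (Fin n → ℝ) → ℝ}
    (h : ∀ p ∈ U, f p = g p) {p : Fin n → ℝ} (hp : p ∈ U) (i : Fin n) :
    pd i f p = pd i g p := by
  rw [pd, pd, Filter.EventuallyEq.fderiv_eq (Filter.eventually_of_mem (hU.mem_nhds hp) h)]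

/-- The `r`-component of the `1`-form whose primitives are the fluxes of `f`. -/
noncomputable def fluxR (f : (Fin 2 → ℝ) → ℝ) (p : Fin 2 → ℝ) : ℝ :=
  -(p 1) * pd 0 f p - pd 1 f p

/-- The `v`-component of the `1`-form whose primitives are the fluxes of `f`. -/
noncomputable def fluxV (f : (Fin 2 → ℝ) → ℝ) (p : Fin 2 → ℝ) : ℝ :=
  -(p 0) * pd 0 f p - p 1 * pd 1 f p

lemma contDiffOn_fluxR {U : Set (Fin 2 → ℝ)} (hU : IsOpen U) {f : (Fin 2 → ℝ) → ℝ}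
    (hf : ContDiffOn ℝ 2 f U) : ContDiffOn ℝ 1 (fluxR f) U :=
  ((contDiff_apply ℝ ℝ (1 : Fin 2)).contDiffOn.neg.mul (contDiffOn_pd hU hf 0)).sub
    (contDiffOn_pd hU hf 1)

lemma contDiffOn_fluxV {U : Set (Fin 2 → ℝ)} (hU : IsOpen U) {f : (Fin 2 → ℝ) → ℝ}
    (hf : ContDiffOn ℝ 2 f U) : ContDiffOn ℝ 1 (fluxV f) U :=
  ((contDiff_apply ℝ ℝ (0 : Fin 2)).contDiffOn.neg.mul (contDiffOn_pd hU hf 0)).sub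
    ((contDiff_apply ℝ ℝ (1 : Fin 2)).contDiffOn.mul (contDiffOn_pd hU hf 1))

/-- The exterior derivative of the flux form measures the failure of `f_vv = r f_rr`. -/
lemma cross_identity {U : Set (Fin 2 → ℝ)} (hU : IsOpen U) {f : (Fin 2 → ℝ) → ℝ}
    (hf : ContDiffOn ℝ 2 f U) {p : Fin 2 → ℝ} (hp : p ∈ U) :
    pd 1 (fluxR f) p - pd 0 (fluxV f) p = p 0 * pd 0 (pd 0 f) p - pd 1 (pd 1 f) p := by
  have hd (i : Fin 2) : HasFDerivAt (pd i f) (fderiv ℝ (pd i f) p) p :=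
    (((contDiffOn_pd hU hf i).differentiableOn (by norm_num)).differentiableAt
      (hU.mem_nhds hp)).hasFDerivAt
  have hR : HasFDerivAt (fluxR f) _ p := ((hasFDerivAt_apply 1 p).neg.mul (hd 0)).sub (hd 1)
  have hV : HasFDerivAt (fluxV f) _ p :=
    ((hasFDerivAt_apply 0 p).neg.mul (hd 0)).sub ((hasFDerivAt_apply 1 p).mul (hd 1))
  have hc := pd_comm_s16 hU hf hp 0 1
  have eR : pd 1 (fluxR f) p = -(p 1) * pd 1 (pd 0 f) p - pd 0 f p - pd 1 (pd 1 f) p := by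
    rw [pd, hR.fderiv]
    simp [pd]
    ring
  have eV : pd 0 (fluxV f) p =
      -(p 0) * pd 0 (pd 0 f) p - pd 0 f p - p 1 * pd 0 (pd 1 f) p := by
    rw [pd, hV.fderiv]
    simp [pd]
    ring
  rw [eR, eV, hc]
  ring

/-- On a convex open set `U ⊆ (0,∞) × ℝ`, a `C²` function `f(r,v)` admits a flux `g` with
`g_r = −v f_r − f_v`, `g_v = −r f_r − v f_v` iff `f_vv = r f_rr`. -/
theorem stmt_16 (U : Set (Fin 2 → ℝ)) (hUopen : IsOpen U) (hUne : U.Nonempty)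
    (hUconv : Convex ℝ U) (hUsub : U ⊆ {p : Fin 2 → ℝ | 0 < p 0})
    (f : (Fin 2 → ℝ) → ℝ) (hf : ContDiffOn ℝ 2 f U) :
    (∃ g : (Fin 2 → ℝ) → ℝ, ContDiffOn ℝ 2 g U ∧
      (∀ p ∈ U, pd 0 g p = -(p 1) * pd 0 f p - pd 1 f p) ∧
      (∀ p ∈ U, pd 1 g p = -(p 0) * pd 0 f p - p 1 * pd 1 f p)) ↔
    (∀ p ∈ U, pd 1 (pd 1 f) p = p 0 * pd 0 (pd 0 f) p) := by
  constructor
  · rintro ⟨g, hg, h0, h1⟩ p hp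
    have hsymm := pd_comm_s16 hUopen hg hp 1 0
    rw [pd_congr (g := fluxR f) hUopen h0 hp, pd_congr (g := fluxV f) hUopen h1 hp] at hsymm
    linarith [cross_identity hUopen hf hp]
  · intro h
    let ω : (Fin 2 → ℝ) → (Fin 2 → ℝ) →L[ℝ] ℝ := fun p =>
      fluxR f p • ContinuousLinearMap.proj (R := ℝ) (φ := fun _ : Fin 2 => ℝ) 0 +
        fluxV f p • ContinuousLinearMap.proj (R := ℝ) (φ := fun _ : Fin 2 => ℝ) 1
    have hω : ContDiffOn ℝ 1 ω U :=
      ((contDiffOn_fluxR hUopen hf).smul contDiffOn_const).add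
        ((contDiffOn_fluxV hUopen hf).smul contDiffOn_const)
    obtain ⟨g, hg⟩ := hUconv.exists_forall_hasFDerivAt_of_fderiv_symmetric hUopen
      (hω.differentiableOn (by norm_num)) (fun p hp x y => by
        have hR := (((contDiffOn_fluxR hUopen hf).differentiableOn (by norm_num)).differentiableAt
          (hUopen.mem_nhds hp)).hasFDerivAt
        have hV := (((contDiffOn_fluxV hUopen hf).differentiableOn (by norm_num)).differentiableAt
          (hUopen.mem_nhds hp)).hasFDerivAt
        have hd : HasFDerivAt ω _ p := (hR.smul_const (ContinuousLinearMap.proj (R := ℝ) (φ := fun _ : Fin 2 => ℝ) 0)).add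
          (hV.smul_const (ContinuousLinearMap.proj (R := ℝ) (φ := fun _ : Fin 2 => ℝ) 1))
        have hclosed : pd 1 (fluxR f) p = pd 0 (fluxV f) p := by
          linarith [cross_identity hUopen hf hp, h p hp]
        have expand (F : (Fin 2 → ℝ) → ℝ) (z : Fin 2 → ℝ) :
            fderiv ℝ F p z = z 0 * pd 0 F p + z 1 * pd 1 F p := by
          have hz : z = z 0 • Pi.single 0 1 + z 1 • Pi.single 1 1 := by
            ext i
            fin_cases i <;> simp
          conv_lhs => rw [hz]
          simp only [map_add, map_smul, smul_eq_mul, pd]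
        rw [hd.fderiv]
        simp only [add_apply, ContinuousLinearMap.smulRight_apply,
          smul_apply, ContinuousLinearMap.proj_apply, smul_eq_mul, expand]
        rw [hclosed]
        ring)
    refine ⟨g, ?_, fun p hp => ?_, fun p hp => ?_⟩
    · have : ContDiffOn ℝ (1 + 1) g U := by
        refine (contDiffOn_succ_iff_fderiv_of_isOpen hUopen).2
          ⟨fun p hp => (hg p hp).differentiableAt.differentiableWithinAt, by simp, ?_⟩
        exact hω.congr fun p hp => (hg p hp).fderiv
      exact this.of_le (by norm_num)
    · rw [pd, (hg p hp).fderiv]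
      simp [ω, fluxR]
    · rw [pd, (hg p hp).fderiv]
      simp [ω, fluxV]
end

section
/- Let n ≥ 1, let Ω ⊆ ℝⁿ be open, and let k : Ω × ℝⁿ → ℝ be a C³ function of the variables (u, p) = (u¹,…,uⁿ, p¹,…,pⁿ). For each β define E_β : Ω × ℝⁿ × ℝⁿ → ℝ by E_β(u,p,q) := ∂k/∂u^β − Σ_γ p^γ·∂²k/∂u^γ∂p^β − Σ_γ q^γ·∂²k/∂p^γ∂p^β (derivatives evaluated at (u,p)). Then the homogeneity condition Σ_γ p^γ·∂E_β/∂p^γ + 2·Σ_γ q^γ·∂E_β/∂q^γ = E_β holds for all (u,p,q) and all β if and only if the following two systems of equations hold for all (u,p) ∈ Ω × ℝⁿ and all β, γ: (i) Σ_α p^α·∂³k/∂p^α∂p^β∂p^γ + ∂²k/∂p^β∂p^γ = 0, and (ii) Σ_α p^α·∂²k/∂p^α∂u^β − Σ_{α,γ} p^α p^γ·∂³k/∂u^γ∂p^α∂p^β − ∂k/∂u^β = 0. -/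
section PartialDerivatives

variable {n : ℕ}

theorem pd_sub {f g : (Fin n → ℝ) → ℝ} {x : Fin n → ℝ} (i : Fin n)
    (hf : DifferentiableAt ℝ f x) (hg : DifferentiableAt ℝ g x) :
    pd i (fun y => f y - g y) x = pd i f x - pd i g x := by
  unfold pd
  rw [fderiv_fun_sub hf hg]
  rfl

theorem pd_sum {f : Fin n → (Fin n → ℝ) → ℝ} {x : Fin n → ℝ} (i : Fin n)
    (hf : ∀ j, DifferentiableAt ℝ (f j) x) :
    pd i (fun y => ∑ j, f j y) x = ∑ j, pd i (f j) x := by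
  unfold pd
  rw [fderiv_fun_sum (fun j _ => hf j)]
  simp

theorem pd_coord_mul {g : (Fin n → ℝ) → ℝ} {x : Fin n → ℝ} (i j : Fin n)
    (hg : DifferentiableAt ℝ g x) :
    pd i (fun y => y j * g y) x = x j * pd i g x + (if j = i then g x else 0) := by
  have h1 : HasFDerivAt (fun y : Fin n → ℝ => y j)
      (ContinuousLinearMap.proj (R := ℝ) (φ := fun _ : Fin n => ℝ) j) x := hasFDerivAt_apply j x
  unfold pd
  rw [(h1.fun_mul hg.hasFDerivAt).fderiv]
  simp [Pi.single_apply]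

theorem pd_const_mul {g : (Fin n → ℝ) → ℝ} {x : Fin n → ℝ} (i : Fin n) (c : ℝ)
    (hg : DifferentiableAt ℝ g x) :
    pd i (fun y => c * g y) x = c * pd i g x := by
  unfold pd
  rw [(hg.hasFDerivAt.const_mul c).fderiv]
  simp

theorem pd_const (i : Fin n) (c : ℝ) (x : Fin n → ℝ) : pd i (fun _ => c) x = 0 := by
  unfold pd
  simp

theorem pd_slice_fst {f : (Fin n → ℝ) → (Fin n → ℝ) → ℝ} {u p : Fin n → ℝ} (i : Fin n)
    (hf : DifferentiableAt ℝ (fun z : (Fin n → ℝ) × (Fin n → ℝ) => f z.1 z.2) (u, p)) :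
    pd i (fun u' => f u' p) u
      = fderiv ℝ (fun z : (Fin n → ℝ) × (Fin n → ℝ) => f z.1 z.2) (u, p) (Pi.single i 1, 0) := by
  have h := hf.hasFDerivAt.comp u (hasFDerivAt_prodMk_left (𝕜 := ℝ) u p)
  unfold pd
  change fderiv ℝ ((fun z : (Fin n → ℝ) × (Fin n → ℝ) => f z.1 z.2) ∘ fun e => (e, p)) u _ = _
  rw [h.fderiv]
  simp

theorem pd_slice_snd {f : (Fin n → ℝ) → (Fin n → ℝ) → ℝ} {u p : Fin n → ℝ} (i : Fin n)
    (hf : DifferentiableAt ℝ (fun z : (Fin n → ℝ) × (Fin n → ℝ) => f z.1 z.2) (u, p)) :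
    pd i (f u) p
      = fderiv ℝ (fun z : (Fin n → ℝ) × (Fin n → ℝ) => f z.1 z.2) (u, p) (0, Pi.single i 1) := by
  have h := hf.hasFDerivAt.comp p (hasFDerivAt_prodMk_right (𝕜 := ℝ) u p)
  unfold pd
  change fderiv ℝ ((fun z : (Fin n → ℝ) × (Fin n → ℝ) => f z.1 z.2) ∘ Prod.mk u) p _ = _
  rw [h.fderiv]
  simp

variable {Ω : Set (Fin n → ℝ)} {f : (Fin n → ℝ) → (Fin n → ℝ) → ℝ}

theorem differentiableAt_of_contDiffOn (hΩ : IsOpen Ω) {m : WithTop ℕ∞} (hm : m ≠ 0)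
    (hf : ContDiffOn ℝ m (fun z : (Fin n → ℝ) × (Fin n → ℝ) => f z.1 z.2) (Ω ×ˢ Set.univ))
    {u : Fin n → ℝ} (hu : u ∈ Ω) (p : Fin n → ℝ) :
    DifferentiableAt ℝ (fun z : (Fin n → ℝ) × (Fin n → ℝ) => f z.1 z.2) (u, p) :=
  (hf.contDiffAt ((hΩ.prod isOpen_univ).mem_nhds ⟨hu, trivial⟩)).differentiableAt hm

theorem differentiableAt_slice_snd (hΩ : IsOpen Ω) {m : WithTop ℕ∞} (hm : m ≠ 0)
    (hf : ContDiffOn ℝ m (fun z : (Fin n → ℝ) × (Fin n → ℝ) => f z.1 z.2) (Ω ×ˢ Set.univ))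
    {u : Fin n → ℝ} (hu : u ∈ Ω) (p : Fin n → ℝ) :
    DifferentiableAt ℝ (fun p' => f u p') p :=
  ((differentiableAt_of_contDiffOn hΩ hm hf hu p).hasFDerivAt.comp p
    (hasFDerivAt_prodMk_right (𝕜 := ℝ) u p)).differentiableAt

theorem contDiffOn_pd_fst (hΩ : IsOpen Ω) {m m' : WithTop ℕ∞} (hm : m' + 1 ≤ m)
    (hf : ContDiffOn ℝ m (fun z : (Fin n → ℝ) × (Fin n → ℝ) => f z.1 z.2) (Ω ×ˢ Set.univ))
    (i : Fin n) :
    ContDiffOn ℝ m' (fun z : (Fin n → ℝ) × (Fin n → ℝ) => pd i (fun u' => f u' z.2) z.1)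
      (Ω ×ˢ Set.univ) := by
  have h := (hf.fderiv_of_isOpen (hΩ.prod isOpen_univ) hm).clm_apply
    (contDiffOn_const (c := ((Pi.single i 1, 0) : (Fin n → ℝ) × (Fin n → ℝ))))
  refine h.congr ?_
  rintro ⟨u, p⟩ ⟨hu, -⟩
  exact pd_slice_fst i (differentiableAt_of_contDiffOn hΩ
    (by rintro rfl; simp at hm) hf hu p)

theorem contDiffOn_pd_snd (hΩ : IsOpen Ω) {m m' : WithTop ℕ∞} (hm : m' + 1 ≤ m)
    (hf : ContDiffOn ℝ m (fun z : (Fin n → ℝ) × (Fin n → ℝ) => f z.1 z.2) (Ω ×ˢ Set.univ))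
    (i : Fin n) :
    ContDiffOn ℝ m' (fun z : (Fin n → ℝ) × (Fin n → ℝ) => pd i (f z.1) z.2)
      (Ω ×ˢ Set.univ) := by
  have h := (hf.fderiv_of_isOpen (hΩ.prod isOpen_univ) hm).clm_apply
    (contDiffOn_const (c := ((0, Pi.single i 1) : (Fin n → ℝ) × (Fin n → ℝ))))
  refine h.congr ?_
  rintro ⟨u, p⟩ ⟨hu, -⟩
  exact pd_slice_snd i (differentiableAt_of_contDiffOn hΩ
    (by rintro rfl; simp at hm) hf hu p)

/-- Mixed derivatives in `u` and `p` commute for a `C²` function, by symmetry of its full second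
derivative on the product space. -/
theorem pd_comm_s18 (hΩ : IsOpen Ω)
    (hf : ContDiffOn ℝ 2 (fun z : (Fin n → ℝ) × (Fin n → ℝ) => f z.1 z.2) (Ω ×ˢ Set.univ))
    (i j : Fin n) {u : Fin n → ℝ} (hu : u ∈ Ω) (p : Fin n → ℝ) :
    pd i (fun p' => pd j (fun u' => f u' p') u) p = pd j (fun u' => pd i (f u') p) u := by
  have hopen : IsOpen (Ω ×ˢ (Set.univ : Set (Fin n → ℝ))) := hΩ.prod isOpen_univ
  have hmem : Ω ×ˢ (Set.univ : Set (Fin n → ℝ)) ∈ nhds (u, p) := hopen.mem_nhds ⟨hu, trivial⟩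
  have hd : ∀ z ∈ Ω ×ˢ (Set.univ : Set (Fin n → ℝ)),
      DifferentiableAt ℝ (fun z : (Fin n → ℝ) × (Fin n → ℝ) => f z.1 z.2) z := fun z hz =>
    differentiableAt_of_contDiffOn hΩ two_ne_zero hf hz.1 z.2
  have hsymm : IsSymmSndFDerivAt ℝ (fun z : (Fin n → ℝ) × (Fin n → ℝ) => f z.1 z.2) (u, p) :=
    (hf.contDiffAt hmem).isSymmSndFDerivAt (by simp)
  have hd2 : DifferentiableAt ℝ
      (fderiv ℝ (fun z : (Fin n → ℝ) × (Fin n → ℝ) => f z.1 z.2)) (u, p) :=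
    ((hf.fderiv_of_isOpen (m := 1) hopen (by norm_num)).contDiffAt hmem).differentiableAt
      one_ne_zero
  have h12 : (1 : WithTop ℕ∞) + 1 ≤ 2 := by norm_num
  rw [pd_slice_snd (f := fun u p => pd j (fun u' => f u' p) u) i
      (differentiableAt_of_contDiffOn (f := fun u p => pd j (fun u' => f u' p) u) hΩ
        one_ne_zero (contDiffOn_pd_fst hΩ h12 hf j) hu p),
    pd_slice_fst (f := fun u p => pd i (f u) p) j
      (differentiableAt_of_contDiffOn (f := fun u p => pd i (f u) p) hΩ
        one_ne_zero (contDiffOn_pd_snd hΩ h12 hf i) hu p)]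
  have e1 : (fun z : (Fin n → ℝ) × (Fin n → ℝ) => pd j (fun u' => f u' z.2) z.1)
      =ᶠ[nhds (u, p)] fun z =>
        fderiv ℝ (fun z : (Fin n → ℝ) × (Fin n → ℝ) => f z.1 z.2) z (Pi.single j 1, 0) := by
    filter_upwards [hmem] with z hz using pd_slice_fst j (hd z hz)
  have e2 : (fun z : (Fin n → ℝ) × (Fin n → ℝ) => pd i (f z.1) z.2)
      =ᶠ[nhds (u, p)] fun z =>
        fderiv ℝ (fun z : (Fin n → ℝ) × (Fin n → ℝ) => f z.1 z.2) z (0, Pi.single i 1) := by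
    filter_upwards [hmem] with z hz using pd_slice_snd i (hd z hz)
  rw [e1.fderiv_eq, e2.fderiv_eq,
    (hd2.hasFDerivAt.clm_apply (hasFDerivAt_const _ _)).fderiv,
    (hd2.hasFDerivAt.clm_apply (hasFDerivAt_const _ _)).fderiv]
  simpa using hsymm (0, Pi.single i 1) (Pi.single j 1, 0)

end PartialDerivatives

/-- The homogeneity condition on the variational derivative expansion
`E_β(u,p,q) = ∂k/∂u^β − Σ_γ p^γ ∂²k/∂u^γ∂p^β − Σ_γ q^γ ∂²k/∂p^γ∂p^β` is equivalent to the
linear PDE system (3.22)–(3.23) for the density `k(u,p)`. -/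
theorem stmt_18 {n : ℕ} (hn : 1 ≤ n) (Ω : Set (Fin n → ℝ)) (hΩ : IsOpen Ω)
    (k : (Fin n → ℝ) → (Fin n → ℝ) → ℝ)
    (hk : ContDiffOn ℝ 3 (fun q : (Fin n → ℝ) × (Fin n → ℝ) => k q.1 q.2)
      (Ω ×ˢ (Set.univ : Set (Fin n → ℝ))))
    (E : (Fin n → ℝ) → (Fin n → ℝ) → (Fin n → ℝ) → Fin n → ℝ)
    (hE : ∀ (u p q : Fin n → ℝ) (β : Fin n), E u p q β =
      pd β (fun u' => k u' p) u
        - ∑ γ : Fin n, p γ * pd γ (fun u' => pd β (k u') p) u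
        - ∑ γ : Fin n, q γ * pd γ (pd β (k u)) p) :
    (∀ u ∈ Ω, ∀ (p q : Fin n → ℝ) (β : Fin n),
      ∑ γ : Fin n, p γ * pd γ (fun p' => E u p' q β) p
          + 2 * ∑ γ : Fin n, q γ * pd γ (fun q' => E u p q' β) q
        = E u p q β)
    ↔
    ((∀ u ∈ Ω, ∀ (p : Fin n → ℝ) (β γ : Fin n),
        ∑ α : Fin n, p α * pd α (pd β (pd γ (k u))) p + pd β (pd γ (k u)) p = 0)
      ∧
      (∀ u ∈ Ω, ∀ (p : Fin n → ℝ) (β : Fin n),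
        ∑ α : Fin n, p α * pd α (fun p' => pd β (fun u' => k u' p') u) p
          - ∑ α : Fin n, ∑ γ : Fin n,
              p α * p γ * pd γ (fun u' => pd α (pd β (k u')) p) u
          - pd β (fun u' => k u' p) u = 0)) := by
  have h23 : (2 : WithTop ℕ∞) + 1 ≤ 3 := by norm_num
  have h12 : (1 : WithTop ℕ∞) + 1 ≤ 2 := by norm_num
  have cU := fun β => contDiffOn_pd_fst hΩ h23 hk β
  have cP := fun β => contDiffOn_pd_snd hΩ h23 hk β
  have cUP := fun β γ => contDiffOn_pd_fst (f := fun u p => pd β (k u) p) hΩ h12 (cP β) γ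
  have cPP := fun β γ => contDiffOn_pd_snd (f := fun u p => pd β (k u) p) hΩ h12 (cP β) γ
  -- The Euler operator applied to `E_β`, minus `E_β`, is affine in `q`.
  have key : ∀ u ∈ Ω, ∀ (p q : Fin n → ℝ) (β : Fin n),
      ∑ γ : Fin n, p γ * pd γ (fun p' => E u p' q β) p
          + 2 * ∑ γ : Fin n, q γ * pd γ (fun q' => E u p q' β) q - E u p q β
        = (∑ α : Fin n, p α * pd α (fun p' => pd β (fun u' => k u' p') u) p
            - ∑ α : Fin n, ∑ γ : Fin n,
                p α * p γ * pd γ (fun u' => pd α (pd β (k u')) p) u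
            - pd β (fun u' => k u' p) u)
          - ∑ γ : Fin n, q γ * (∑ α : Fin n, p α * pd α (pd γ (pd β (k u))) p
              + pd γ (pd β (k u)) p) := by
    intro u hu p q β
    have dU : DifferentiableAt ℝ (fun p' => pd β (fun u' => k u' p') u) p :=
      differentiableAt_slice_snd (f := fun u p => pd β (fun u' => k u' p) u)
        hΩ two_ne_zero (cU β) hu p
    have dUP : ∀ γ, DifferentiableAt ℝ (fun p' => pd γ (fun u' => pd β (k u') p') u) p := fun γ =>
      differentiableAt_slice_snd (f := fun u p => pd γ (fun u' => pd β (k u') p) u)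
        hΩ one_ne_zero (cUP β γ) hu p
    have dPP : ∀ γ, DifferentiableAt ℝ (fun p' => pd γ (pd β (k u)) p') p := fun γ =>
      differentiableAt_slice_snd (f := fun u p => pd γ (pd β (k u)) p)
        hΩ one_ne_zero (cPP β γ) hu p
    have dc : ∀ (γ : Fin n) (x : Fin n → ℝ), DifferentiableAt ℝ (fun y : Fin n → ℝ => y γ) x :=
      fun γ x => differentiableAt_apply γ x
    have hp : ∀ α, pd α (fun p' => E u p' q β) p
        = pd α (fun p' => pd β (fun u' => k u' p') u) p
          - (∑ γ, p γ * pd γ (fun u' => pd α (pd β (k u')) p) u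
              + pd α (fun u' => pd β (k u') p) u)
          - ∑ γ, q γ * pd α (pd γ (pd β (k u))) p := by
      intro α
      simp only [hE]
      rw [pd_sub α (dU.fun_sub (DifferentiableAt.fun_sum fun γ _ => (dc γ p).fun_mul (dUP γ)))
          (DifferentiableAt.fun_sum fun γ _ => (dPP γ).const_mul (q γ)),
        pd_sub α dU (DifferentiableAt.fun_sum fun γ _ => (dc γ p).fun_mul (dUP γ)),
        pd_sum α (fun γ => (dc γ p).fun_mul (dUP γ)),
        pd_sum α (fun γ => (dPP γ).const_mul (q γ))]
      congr 1
      · congr 1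
        simp only [pd_coord_mul α _ (dUP _), Finset.sum_add_distrib, Finset.sum_ite_eq',
          Finset.mem_univ, if_true]
        congr 1
        refine Finset.sum_congr rfl fun γ _ => ?_
        rw [pd_comm_s18 (f := fun u p => pd β (k u) p) hΩ (cP β) α γ hu p]
      · exact Finset.sum_congr rfl fun γ _ => pd_const_mul α (q γ) (dPP γ)
    have hq : ∀ α, pd α (fun q' => E u p q' β) q = - pd α (pd β (k u)) p := by
      intro α
      have d1 : ∀ γ : Fin n,
          DifferentiableAt ℝ (fun q' : Fin n → ℝ => q' γ * pd γ (pd β (k u)) p) q := fun γ =>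
        (dc γ q).fun_mul (differentiableAt_const _)
      simp only [hE]
      rw [pd_sub α (differentiableAt_const _) (DifferentiableAt.fun_sum fun γ _ => d1 γ),
        pd_sum α d1, pd_const]
      simp only [pd_coord_mul α _ (differentiableAt_const _), pd_const]
      simp
    have hswap : ∑ α, p α * ∑ γ, q γ * pd α (pd γ (pd β (k u))) p
        = ∑ γ, q γ * ∑ α, p α * pd α (pd γ (pd β (k u))) p := by
      simp only [Finset.mul_sum]
      rw [Finset.sum_comm]
      exact Finset.sum_congr rfl fun γ _ => Finset.sum_congr rfl fun α _ => by ring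
    have hassoc : ∑ α, p α * ∑ γ, p γ * pd γ (fun u' => pd α (pd β (k u')) p) u
        = ∑ α, ∑ γ, p α * p γ * pd γ (fun u' => pd α (pd β (k u')) p) u := by
      simp only [Finset.mul_sum, mul_assoc]
    simp only [hp, hq, hE u p q β, mul_sub, mul_add, Finset.sum_sub_distrib,
      Finset.sum_add_distrib, hswap, hassoc, mul_neg, Finset.sum_neg_distrib]
    ring
  constructor
  · intro h
    have hA : ∀ u ∈ Ω, ∀ (p : Fin n → ℝ) (β : Fin n),
        ∑ α : Fin n, p α * pd α (fun p' => pd β (fun u' => k u' p') u) p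
          - ∑ α : Fin n, ∑ γ : Fin n,
              p α * p γ * pd γ (fun u' => pd α (pd β (k u')) p) u
          - pd β (fun u' => k u' p) u = 0 := by
      intro u hu p β
      have h0 := key u hu p 0 β
      rw [sub_eq_zero.mpr (h u hu p 0 β)] at h0
      simpa using h0.symm
    refine ⟨fun u hu p β γ => ?_, hA⟩
    have h1 := key u hu p (Pi.single β 1) γ
    rw [sub_eq_zero.mpr (h u hu p _ γ), hA u hu p γ] at h1
    simp only [Pi.single_apply, ite_mul, one_mul, zero_mul, Finset.sum_ite_eq', Finset.mem_univ,
      if_true] at h1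
    linarith
  · rintro ⟨hB, hA⟩ u hu p q β
    have h1 := key u hu p q β
    rw [hA u hu p β] at h1
    simp only [hB u hu p _ β, mul_zero, Finset.sum_const_zero, sub_zero] at h1
    exact sub_eq_zero.mp h1
end
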